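/- Let A, B ∈ ℂ[x,y] be homogeneous of degree 4 without common factor, and suppose D = (∂A/∂x)(∂B/∂y) − (∂A/∂y)(∂B/∂x) = c·ℓ₁ℓ₂ℓ₃ℓ₄³ for some c ∈ ℂ∖{0} and pairwise non-proportional linear forms ℓ₁, ℓ₂, ℓ₃, ℓ₄ each dividing C = xA + yB (i.e. the homogeneous foliation defined by ω = A dx + B dy is convex of type 3·R₁+1·R₃). Then ω is linearly conjugate to ω₅ = y²(6x²+4xy+y²)dx + 3x⁴dy. -/

import Mathlib

open MvPolynomial

noncomputable section

/-- Polynomials in two variables `x = X 0`, `y = X 1` over `ℂ`. -/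
abbrev P2 : Type := MvPolynomial (Fin 2) ℂ

/-- The inflection polynomial `D_ω = A_x B_y - A_y B_x` of `ω = A dx + B dy`. -/
def Dpoly (A B : P2) : P2 :=
  pderiv 0 A * pderiv 1 B - pderiv 1 A * pderiv 0 B

/-- The tangent cone `C_ω = xA + yB` of `ω = A dx + B dy`. -/
def Cpoly (A B : P2) : P2 := X 0 * A + X 1 * B

/-- `A` and `B` have no common (non-unit) factor. -/
def NoCommonFactor (A B : P2) : Prop := ∀ p : P2, p ∣ A → p ∣ B → IsUnit p

/-- Convexity: every linear factor of `D_ω` divides `C_ω`. -/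
def IsConvexPair (A B : P2) : Prop :=
  ∀ l : P2, l.IsHomogeneous 1 → l ≠ 0 → l ∣ Dpoly A B → l ∣ Cpoly A B

/-- Composition of a polynomial with the linear map `φ(x,y) = (a₁x + a₂y, a₃x + a₄y)`. -/
def comp2 (a₁ a₂ a₃ a₄ : ℂ) (p : P2) : P2 :=
  aeval ![C a₁ * X 0 + C a₂ * X 1, C a₃ * X 0 + C a₄ * X 1] p

/-- `ω = A dx + B dy` is linearly conjugate to `ω' = A' dx + B' dy`:
`φ*ω = λ ω'` for some `φ ∈ GL₂(ℂ)` and `λ ∈ ℂ \ {0}`. -/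
def LinConj (A B A' B' : P2) : Prop :=
  ∃ a₁ a₂ a₃ a₄ lam : ℂ, a₁ * a₄ - a₂ * a₃ ≠ 0 ∧ lam ≠ 0 ∧
    C a₁ * comp2 a₁ a₂ a₃ a₄ A + C a₃ * comp2 a₁ a₂ a₃ a₄ B = C lam * A' ∧
    C a₂ * comp2 a₁ a₂ a₃ a₄ A + C a₄ * comp2 a₁ a₂ a₃ a₄ B = C lam * B'

/-- ω₁ = y⁴dx − x⁴dy -/
def A1 : P2 := X 1 ^ 4
def B1 : P2 := -X 0 ^ 4
/-- ω₂ = y³(2x−y)dx + x³(x−2y)dy -/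
def A2 : P2 := X 1 ^ 3 * (2 * X 0 - X 1)
def B2 : P2 := X 0 ^ 3 * (X 0 - 2 * X 1)
/-- ω₃ = y²(6x²+4xy+y²)dx − x³(x+4y)dy -/
def A3 : P2 := X 1 ^ 2 * (6 * X 0 ^ 2 + 4 * X 0 * X 1 + X 1 ^ 2)
def B3 : P2 := -(X 0 ^ 3 * (X 0 + 4 * X 1))
/-- ω₄ = y³(4x+y)dx + x³(x+4y)dy -/
def A4 : P2 := X 1 ^ 3 * (4 * X 0 + X 1)
def B4 : P2 := X 0 ^ 3 * (X 0 + 4 * X 1)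
/-- ω₅ = y²(6x²+4xy+y²)dx + 3x⁴dy -/
def A5 : P2 := X 1 ^ 2 * (6 * X 0 ^ 2 + 4 * X 0 * X 1 + X 1 ^ 2)
def B5 : P2 := 3 * X 0 ^ 4


/-- Two polynomials are proportional (one is a constant multiple of the other). -/
def Proportional (l₁ l₂ : P2) : Prop := ∃ t : ℂ, l₁ = C t * l₂ ∨ l₂ = C t * l₁


theorem homog_repr (n : ℕ) (p : P2) (hp : p.IsHomogeneous n) :
    p = ∑ i ∈ Finset.range (n+1),
      C (coeff (Finsupp.single 0 i + Finsupp.single 1 (n-i)) p) * X 0 ^ i * X 1 ^ (n-i) := by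
  have key : ∀ i j : ℕ, ∀ a : ℂ, (C a * X 0 ^ i * X 1 ^ j : P2)
      = monomial (Finsupp.single 0 i + Finsupp.single 1 j) a := by
    intro i j a
    rw [X_pow_eq_monomial, X_pow_eq_monomial, C_mul_monomial, monomial_mul]
    simp
  simp only [key]
  ext d
  rw [coeff_sum]
  simp only [coeff_monomial]
  by_cases hd : d 0 + d 1 = n
  · rw [Finset.sum_eq_single (d 0)]
    · have : (Finsupp.single 0 (d 0) + Finsupp.single 1 (n - d 0) : Fin 2 →₀ ℕ) = d := by
        ext k
        fin_cases k
        · simp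
        · simp; omega
      rw [this, if_pos rfl]
    · intro b _ hb
      rw [if_neg]
      rintro rfl
      simp at hb
    · intro h
      simp at h
      omega
  · rw [Finset.sum_eq_zero]
    · by_contra h
      have h2 := hp h
      apply hd
      rw [← h2]
      simp [Finsupp.weight_apply, Finsupp.sum_fintype, Fin.sum_univ_two]
    · intro i hi
      rw [if_neg]
      rintro rfl
      apply hd
      simp at hi ⊢
      omega

theorem lin_repr (p : P2) (hp : p.IsHomogeneous 1) :
    ∃ a b : ℂ, p = C a * X 0 + C b * X 1 := by
  have h := homog_repr 1 p hp
  simp [Finset.sum_range_succ] at h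
  exact ⟨_, _, by rw [add_comm]; exact h⟩

theorem quart_repr (p : P2) (hp : p.IsHomogeneous 4) :
    ∃ a0 a1 a2 a3 a4 : ℂ, p = C a0 * X 1 ^ 4 + C a1 * X 0 * X 1 ^ 3 + C a2 * X 0 ^ 2 * X 1 ^ 2
      + C a3 * X 0 ^ 3 * X 1 + C a4 * X 0 ^ 4 := by
  have h := homog_repr 4 p hp
  simp [Finset.sum_range_succ] at h
  exact ⟨_, _, _, _, _, h⟩

theorem comp2_comp2 (a₁ a₂ a₃ a₄ b₁ b₂ b₃ b₄ : ℂ) (p : P2) :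
    comp2 b₁ b₂ b₃ b₄ (comp2 a₁ a₂ a₃ a₄ p) =
      comp2 (a₁*b₁+a₂*b₃) (a₁*b₂+a₂*b₄) (a₃*b₁+a₄*b₃) (a₃*b₂+a₄*b₄) p := by
  unfold comp2
  induction p using MvPolynomial.induction_on with
  | C a => simp
  | add p q hp hq => simp only [map_add, hp, hq]
  | mul_X p i hp =>
    rw [map_mul, map_mul, map_mul, hp]
    refine congrArg (fun r : P2 => _ * r) ?_
    fin_cases i <;> simp <;> ring

theorem comp2_id (p : P2) : comp2 1 0 0 1 p = p := by
  unfold comp2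
  induction p using MvPolynomial.induction_on with
  | C a => simp
  | add p q hp hq => simp only [map_add, hp, hq]
  | mul_X p i hp =>
    rw [map_mul, hp]
    refine congrArg (fun r => p * r) ?_
    fin_cases i <;> simp

theorem comp2_add (a b c d : ℂ) (p q : P2) :
    comp2 a b c d (p + q) = comp2 a b c d p + comp2 a b c d q := by simp [comp2]
theorem comp2_sub (a b c d : ℂ) (p q : P2) :
    comp2 a b c d (p - q) = comp2 a b c d p - comp2 a b c d q := by simp [comp2]
theorem comp2_mul (a b c d : ℂ) (p q : P2) :
    comp2 a b c d (p * q) = comp2 a b c d p * comp2 a b c d q := by simp [comp2]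
theorem comp2_pow (a b c d : ℂ) (p : P2) (n : ℕ) :
    comp2 a b c d (p ^ n) = comp2 a b c d p ^ n := by simp [comp2]
theorem comp2_C (a b c d e : ℂ) : comp2 a b c d (C e) = C e := by simp [comp2]
theorem comp2_X0 (a b c d : ℂ) : comp2 a b c d (X 0) = C a * X 0 + C b * X 1 := by simp [comp2]
theorem comp2_X1 (a b c d : ℂ) : comp2 a b c d (X 1) = C c * X 0 + C d * X 1 := by simp [comp2]

theorem pderiv0_comp2 (a b c d : ℂ) (p : P2) :
    pderiv 0 (comp2 a b c d p) =
      C a * comp2 a b c d (pderiv 0 p) + C c * comp2 a b c d (pderiv 1 p) := by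
  induction p using MvPolynomial.induction_on with
  | C e => simp [comp2]
  | add p q hp hq => simp only [map_add, comp2_add, hp, hq]; ring
  | mul_X p i hp =>
    simp only [comp2_mul, Derivation.leibniz, smul_eq_mul, hp, comp2_add]
    fin_cases i
    · simp [comp2_X0, Derivation.leibniz, pderiv_X]
      simp [comp2]; ring
    · simp [comp2_X1, Derivation.leibniz, pderiv_X]
      simp [comp2]; ring

theorem pderiv1_comp2 (a b c d : ℂ) (p : P2) :
    pderiv 1 (comp2 a b c d p) =
      C b * comp2 a b c d (pderiv 0 p) + C d * comp2 a b c d (pderiv 1 p) := by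
  induction p using MvPolynomial.induction_on with
  | C e => simp [comp2]
  | add p q hp hq => simp only [map_add, comp2_add, hp, hq]; ring
  | mul_X p i hp =>
    simp only [comp2_mul, Derivation.leibniz, smul_eq_mul, hp, comp2_add]
    fin_cases i
    · simp [comp2_X0, Derivation.leibniz, pderiv_X]
      simp [comp2]; ring
    · simp [comp2_X1, Derivation.leibniz, pderiv_X]
      simp [comp2]; ring

theorem Dpoly_pull (a b c d : ℂ) (A B : P2) :
    Dpoly (C a * comp2 a b c d A + C c * comp2 a b c d B)
      (C b * comp2 a b c d A + C d * comp2 a b c d B) =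
    C ((a*d-b*c)^2) * comp2 a b c d (Dpoly A B) := by
  simp only [Dpoly, map_add, Derivation.leibniz, smul_eq_mul, pderiv_C, pderiv0_comp2,
    pderiv1_comp2, comp2_sub, comp2_mul, map_sub, map_mul, map_pow]
  ring

theorem Cpoly_pull (a b c d : ℂ) (A B : P2) :
    Cpoly (C a * comp2 a b c d A + C c * comp2 a b c d B)
      (C b * comp2 a b c d A + C d * comp2 a b c d B) =
    comp2 a b c d (Cpoly A B) := by
  simp only [Cpoly, comp2_add, comp2_mul, comp2_X0, comp2_X1]
  ring

theorem comp2_homog (a b c d : ℂ) (n : ℕ) (p : P2) (hp : p.IsHomogeneous n) :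
    (comp2 a b c d p).IsHomogeneous n := by
  have h := IsHomogeneous.aeval (m := n) (n := 1) (φ := p) (τ := Fin 2) (S := ℂ) hp ![C a * X 0 + C b * X 1, C c * X 0 + C d * X 1] (by
    intro i
    fin_cases i
    · exact ((isHomogeneous_X ℂ 0).C_mul a).add ((isHomogeneous_X ℂ 1).C_mul b)
    · exact ((isHomogeneous_X ℂ 0).C_mul c).add ((isHomogeneous_X ℂ 1).C_mul d))
  simpa [comp2] using h

theorem LinConj_trans (a b c d : ℂ) (h : a * d - b * c ≠ 0) (A B A' B' : P2)
    (H : LinConj (C a * comp2 a b c d A + C c * comp2 a b c d B)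
      (C b * comp2 a b c d A + C d * comp2 a b c d B) A' B') : LinConj A B A' B' := by
  obtain ⟨e, f, g, k, lam, hdet, hlam, h1, h2⟩ := H
  refine ⟨a*e+b*g, a*f+b*k, c*e+d*g, c*f+d*k, lam, ?_, hlam, ?_, ?_⟩
  · have := mul_ne_zero h hdet
    intro h0; apply this; linear_combination h0
  · rw [← h1]
    simp only [comp2_add, comp2_mul, comp2_C, comp2_comp2, map_add, map_mul]
    ring
  · rw [← h2]
    simp only [comp2_add, comp2_mul, comp2_C, comp2_comp2, map_add, map_mul]
    ring

theorem NCF_pull (a b c d : ℂ) (h : a * d - b * c = 1) (A B : P2) (H : NoCommonFactor A B) :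
    NoCommonFactor (C a * comp2 a b c d A + C c * comp2 a b c d B)
      (C b * comp2 a b c d A + C d * comp2 a b c d B) := by
  intro p h1 h2
  have hC : (C a * C d - C b * C c : P2) = 1 := by rw [← C_mul, ← C_mul, ← C_sub, h, C_1]
  have hA : p ∣ comp2 a b c d A := by
    have := (h1.mul_left (C d)).sub (h2.mul_left (C c))
    convert this using 1
    linear_combination (-comp2 a b c d A) * hC
  have hB : p ∣ comp2 a b c d B := by
    have := (h2.mul_left (C a)).sub (h1.mul_left (C b))
    convert this using 1
    linear_combination (-comp2 a b c d B) * hC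
  have e1 : ∀ q, comp2 d (-b) (-c) a (comp2 a b c d q) = q := by
    intro q
    rw [comp2_comp2]
    convert comp2_id q using 2 <;> grind
  have e2 : ∀ q, comp2 a b c d (comp2 d (-b) (-c) a q) = q := by
    intro q
    rw [comp2_comp2]
    convert comp2_id q using 2 <;> grind
  have dv : ∀ (q : P2), p ∣ comp2 a b c d q → comp2 d (-b) (-c) a p ∣ q := by
    rintro q ⟨r, hr⟩
    refine ⟨comp2 d (-b) (-c) a r, ?_⟩
    rw [← comp2_mul, ← hr, e1]
  have hu := H _ (dv A hA) (dv B hB)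
  obtain ⟨r, hr⟩ := isUnit_iff_exists_inv.mp hu
  refine isUnit_iff_exists_inv.mpr ⟨comp2 a b c d r, ?_⟩
  have := congrArg (comp2 a b c d) hr
  rw [comp2_mul, e2] at this
  rw [this, ← C_1, comp2_C]

theorem poly6 (c0 c1 c2 c3 c4 c5 c6 : ℂ)
    (h : ∀ x : ℂ, c0 + c1*x + c2*x^2+c3*x^3+c4*x^4+c5*x^5+c6*x^6 = 0) :
    c0 = 0 ∧ c1 = 0 ∧ c2 = 0 ∧ c3 = 0 ∧ c4 = 0 ∧ c5 = 0 ∧ c6 = 0 := by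
  have h0 := h 0
  have h1 := h 1
  have h2 := h (-1)
  have h3 := h 2
  have h4 := h (-2)
  have h5 := h 3
  have h6 := h (-3)
  refine ⟨?_, ?_, ?_, ?_, ?_, ?_, ?_⟩ <;> grind

theorem quad3 (r0 r1 r2 z1 z2 z3 : ℂ) (h12 : z1 ≠ z2) (h13 : z1 ≠ z3) (h23 : z2 ≠ z3)
    (e1 : r0 + r1*z1+r2*z1^2 = 0) (e2 : r0 + r1*z2+r2*z2^2 = 0) (e3 : r0 + r1*z3+r2*z3^2 = 0) :
    r0 = 0 ∧ r1 = 0 ∧ r2 = 0 := by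
  have f1 : r1 + r2*(z1+z2) = 0 := by
    apply mul_left_cancel₀ (sub_ne_zero.mpr h12); linear_combination e1 - e2
  have f2 : r1 + r2*(z1+z3) = 0 := by
    apply mul_left_cancel₀ (sub_ne_zero.mpr h13); linear_combination e1 - e3
  have g : r2 = 0 := by
    apply mul_left_cancel₀ (sub_ne_zero.mpr h23); linear_combination f1 - f2
  subst g
  have g1 : r1 = 0 := by linear_combination f1
  subst g1
  exact ⟨by linear_combination e1, rfl, rfl⟩

theorem nonprop_det (a b c d : ℂ) (h0 : (C a * X 0 + C b * X 1 : P2) ≠ 0)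
    (h : ¬ Proportional (C a * X 0 + C b * X 1) (C c * X 0 + C d * X 1)) :
    a * d - b * c ≠ 0 := by
  intro hd
  apply h
  by_cases ha : a = 0
  · have hb : b ≠ 0 := by
      rintro rfl
      apply h0; simp [ha]
    have hc : c = 0 := by
      apply mul_left_cancel₀ hb; linear_combination -hd + d * ha
    refine ⟨d / b, Or.inr ?_⟩
    rw [mul_add, ← mul_assoc, ← mul_assoc, ← C_mul, ← C_mul]
    congr 3
    · simp [ha, hc]
    · field_simp
  · refine ⟨c / a, Or.inr ?_⟩
    rw [mul_add, ← mul_assoc, ← mul_assoc, ← C_mul, ← C_mul]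
    congr 3
    · field_simp
    · field_simp; linear_combination hd

theorem line_root (p q : ℂ) (F : P2) (h : (C p * X 0 + C q * X 1 : P2) ∣ F) :
    eval ![q, -p] F = 0 := by
  obtain ⟨r, rfl⟩ := h
  simp
  left; ring

theorem core (A B : P2) (hA : A.IsHomogeneous 4) (hB : B.IsHomogeneous 4)
    (hcop : NoCommonFactor A B) (c : ℂ) (hc : c ≠ 0) (p1 q1 p2 q2 p3 q3 : ℂ)
    (hq1 : q1 ≠ 0) (hq2 : q2 ≠ 0) (hq3 : q3 ≠ 0)
    (h12 : p1 * q2 - q1 * p2 ≠ 0) (h13 : p1 * q3 - q1 * p3 ≠ 0) (h23 : p2 * q3 - q2 * p3 ≠ 0)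
    (hd1 : (C p1 * X 0 + C q1 * X 1 : P2) ∣ Cpoly A B)
    (hd2 : (C p2 * X 0 + C q2 * X 1 : P2) ∣ Cpoly A B)
    (hd3 : (C p3 * X 0 + C q3 * X 1 : P2) ∣ Cpoly A B)
    (hd4 : (X 0 : P2) ∣ Cpoly A B)
    (hD : Dpoly A B = C c * (C p1 * X 0 + C q1 * X 1) * (C p2 * X 0 + C q2 * X 1)
      * (C p3 * X 0 + C q3 * X 1) * X 0 ^ 3) : LinConj A B A5 B5 := by
  obtain ⟨a0, a1, a2, a3, a4, rfl⟩ := quart_repr A hA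
  obtain ⟨b0, b1, b2, b3, b4, rfl⟩ := quart_repr B hB
  have hb0 : b0 = 0 := by
    obtain ⟨r, hr⟩ := hd4
    have := congrArg (eval ![0, 1]) hr
    simpa [Cpoly] using this
  subst hb0
  have ha0 : a0 ≠ 0 := by
    rintro rfl
    have := hcop (X 0) ⟨C a1 * X 1 ^ 3 + C a2 * X 0 * X 1 ^ 2
      + C a3 * X 0 ^ 2 * X 1 + C a4 * X 0 ^ 3, by simp; ring⟩
      ⟨C b1 * X 1 ^ 3 + C b2 * X 0 * X 1 ^ 2
      + C b3 * X 0 ^ 2 * X 1 + C b4 * X 0 ^ 3, by simp; ring⟩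
    have h2 := this.map (eval (![0, 0] : Fin 2 → ℂ))
    simp at h2
  have e := fun x : ℂ => congrArg (eval ![x, 1]) hD
  simp [Dpoly, Derivation.leibniz, pderiv_X] at e
  obtain ⟨k0, k1, k2, k3, k4, k5, k6⟩ := poly6 (-4*a0*b1) (-8*a0*b2)
    (-4*a1*b2+4*a2*b1-12*a0*b3) (-8*a1*b3+8*a3*b1-16*a0*b4-c*q1*q2*q3)
    (-12*a1*b4-4*a2*b3+4*a3*b2+12*a4*b1-c*(p1*q2*q3+q1*p2*q3+q1*q2*p3))
    (-8*a2*b4+8*a4*b2-c*(p1*p2*q3+p1*q2*p3+q1*p2*p3))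
    (-4*a3*b4+4*a4*b3-c*p1*p2*p3) (fun x => by linear_combination e x)
  have hb1 : b1 = 0 := by simpa [ha0] using k0
  have hb2 : b2 = 0 := by simpa [ha0] using k1
  subst hb1 hb2
  have hb3 : b3 = 0 := by simpa [ha0] using k2
  subst hb3
  have hb4 : b4 ≠ 0 := by
    rintro rfl
    simp [hc, hq1, hq2, hq3] at k3
  have root : ∀ p q : ℂ, q ≠ 0 → (C p * X 0 + C q * X 1 : P2) ∣ Cpoly
      (C a0 * X 1 ^ 4 + C a1 * X 0 * X 1 ^ 3 + C a2 * X 0 ^ 2 * X 1 ^ 2 + C a3 * X 0 ^ 3 * X 1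
        + C a4 * X 0 ^ 4)
      (C 0 * X 1 ^ 4 + C 0 * X 0 * X 1 ^ 3 + C 0 * X 0 ^ 2 * X 1 ^ 2 + C 0 * X 0 ^ 3 * X 1
        + C b4 * X 0 ^ 4) →
      (p1 * q - q1 * p) * (p2 * q - q2 * p) * (p3 * q - q3 * p) = 0 →
      (a4 - a3 * (a1/(16*a0))) + (a3 + b4 - a3/4 - 2*a2*(a1/(16*a0))) * (-p/q)
        + (a2 - a2/2 - 3*a1*(a1/(16*a0))) * (-p/q)^2 = 0 := by
    intro p q hq hdv h0
    have h1 := line_root p q _ hdv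
    simp [Cpoly] at h1
    have hz : p = -(-p/q) * q := by field_simp
    generalize -p/q = z at hz ⊢
    subst hz
    have f1 : a0*z^4+a1*z^3+a2*z^2+(a3+b4)*z+a4 = 0 := by
      apply mul_left_cancel₀ (pow_ne_zero 5 hq)
      linear_combination h1
    have f2 : 4*a0*z^3+3*a1*z^2+2*a2*z+a3 = 0 := by
      apply mul_left_cancel₀ (mul_ne_zero hb4 (pow_ne_zero 3 hq))
      linear_combination (-c/4) * h0 - q^3/4 * k6 - q^3/4*z*k5 - q^3/4*z^2*k4 - q^3/4*z^3*k3
    have f3 : a1 / (16*a0) * (16 * a0) = a1 := by field_simp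
    generalize a1 / (16*a0) = e at f3 ⊢
    linear_combination f1 - (z/4+e)*f2 + z^3/4*f3
  have r1 := root p1 q1 hq1 hd1 (by ring)
  have r2 := root p2 q2 hq2 hd2 (by ring)
  have r3 := root p3 q3 hq3 hd3 (by ring)
  have zne : ∀ p q p' q' : ℂ, q ≠ 0 → q' ≠ 0 → p * q' - q * p' ≠ 0 → -p/q ≠ -p'/q' := by
    intro p q p' q' h h' hne heq
    rw [div_eq_div_iff h h'] at heq
    apply hne
    linear_combination -heq
  obtain ⟨g0, g1, g2⟩ := quad3 _ _ _ _ _ _ (zne _ _ _ _ hq1 hq2 h12) (zne _ _ _ _ hq1 hq3 h13)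
    (zne _ _ _ _ hq2 hq3 h23) r1 r2 r3
  obtain ⟨t, ht⟩ : ∃ t : ℂ, a1 = 4 * a0 * t := ⟨a1 / (4*a0), by field_simp⟩
  have hE : a1 / (16*a0) = t/4 := by rw [ht]; field_simp; ring
  rw [hE] at g0 g1 g2
  obtain ⟨s, hs⟩ : ∃ s : ℂ, s ^ 3 = b4 / (3 * a0) :=
    IsAlgClosed.exists_pow_nat_eq _ (by norm_num)
  have hs' : b4 = 3 * a0 * s^3 := by rw [hs]; field_simp
  have hs0 : s ≠ 0 := by
    rintro rfl
    apply hb4; rw [hs']; ring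
  subst ht
  have ha2 : a2 = 6 * a0 * t^2 := by linear_combination 2 * g2
  subst ha2
  subst hs'
  have ha3 : a3 = 4*a0*t^3 - 4*a0*s^3 := by linear_combination 4/3 * g1
  subst ha3
  have ha4 : a4 = a0 * t^4 - a0 * t * s^3 := by linear_combination g0
  subst ha4
  refine ⟨1, 0, s - t, s, a0 * s^4, by simpa using hs0, mul_ne_zero ha0 (pow_ne_zero 4 hs0), ?_, ?_⟩
  · simp only [comp2_add, comp2_mul, comp2_pow, comp2_C, comp2_X0, comp2_X1, A5]
    simp only [map_mul, map_sub, map_pow, map_zero, map_one, map_ofNat]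
    ring
  · simp only [comp2_add, comp2_mul, comp2_pow, comp2_C, comp2_X0, comp2_X1, B5]
    simp only [map_mul, map_sub, map_pow, map_zero, map_one, map_ofNat]
    ring

theorem comp2_lin (a b c d p q : ℂ) : comp2 a b c d (C p * X 0 + C q * X 1) =
    C (p*a+q*c) * X 0 + C (p*b+q*d) * X 1 := by
  simp only [comp2_add, comp2_mul, comp2_C, comp2_X0, comp2_X1, map_add, map_mul]
  ring

theorem comp2_dvd (a b c d : ℂ) (p q : P2) (h : p ∣ q) : comp2 a b c d p ∣ comp2 a b c d q := by
  obtain ⟨r, rfl⟩ := h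
  exact ⟨comp2 a b c d r, comp2_mul _ _ _ _ _ _⟩

/-- If the homogeneous foliation `ω = A dx + B dy` of degree 4 is convex of type `3·R₁+1·R₃`,
then `ω` is linearly conjugate to `ω₅ = y²(6x²+4xy+y²)dx + 3x⁴dy`. -/
theorem type_three_R1_one_R3_classification
    (A B : P2) (hA : A.IsHomogeneous 4) (hB : B.IsHomogeneous 4)
    (hcop : NoCommonFactor A B)
    (c : ℂ) (hc : c ≠ 0) (l₁ l₂ l₃ l₄ : P2)
    (h₁ : l₁.IsHomogeneous 1) (h₂ : l₂.IsHomogeneous 1)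
    (h₃ : l₃.IsHomogeneous 1) (h₄ : l₄.IsHomogeneous 1)
    (hn₁ : l₁ ≠ 0) (hn₂ : l₂ ≠ 0) (hn₃ : l₃ ≠ 0) (hn₄ : l₄ ≠ 0)
    (hp₁₂ : ¬ Proportional l₁ l₂) (hp₁₃ : ¬ Proportional l₁ l₃)
    (hp₁₄ : ¬ Proportional l₁ l₄) (hp₂₃ : ¬ Proportional l₂ l₃)
    (hp₂₄ : ¬ Proportional l₂ l₄) (hp₃₄ : ¬ Proportional l₃ l₄)
    (hdvd₁ : l₁ ∣ Cpoly A B) (hdvd₂ : l₂ ∣ Cpoly A B)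
    (hdvd₃ : l₃ ∣ Cpoly A B) (hdvd₄ : l₄ ∣ Cpoly A B)
    (hD : Dpoly A B = C c * l₁ * l₂ * l₃ * l₄ ^ 3) :
    LinConj A B A5 B5 := by
  obtain ⟨p1, q1, rfl⟩ := lin_repr l₁ h₁
  obtain ⟨p2, q2, rfl⟩ := lin_repr l₂ h₂
  obtain ⟨p3, q3, rfl⟩ := lin_repr l₃ h₃
  obtain ⟨p4, q4, rfl⟩ := lin_repr l₄ h₄
  have d12 := nonprop_det _ _ _ _ hn₁ hp₁₂
  have d13 := nonprop_det _ _ _ _ hn₁ hp₁₃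
  have d14 := nonprop_det _ _ _ _ hn₁ hp₁₄
  have d23 := nonprop_det _ _ _ _ hn₂ hp₂₃
  have d24 := nonprop_det _ _ _ _ hn₂ hp₂₄
  have d34 := nonprop_det _ _ _ _ hn₃ hp₃₄
  obtain ⟨a, b, hab⟩ : ∃ a b : ℂ, p4 * a + q4 * b = 1 := by
    by_cases hp : p4 = 0
    · have hq : q4 ≠ 0 := by
        rintro rfl
        apply hn₄; simp [hp]
      exact ⟨0, 1/q4, by field_simp; simp⟩
    · exact ⟨1/p4, 0, by field_simp; simp⟩
  have hdet : a * p4 - (-q4) * b = 1 := by linear_combination hab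
  have hdet0 : a * p4 - (-q4) * b ≠ 0 := by rw [hdet]; exact one_ne_zero
  apply LinConj_trans a (-q4) b p4 hdet0
  have e4 : comp2 a (-q4) b p4 (C p4 * X 0 + C q4 * X 1) = X 0 := by
    rw [comp2_lin, hab, show p4 * -q4 + q4 * p4 = 0 by ring]
    simp
  have hD' := Dpoly_pull a (-q4) b p4 A B
  rw [hdet, hD] at hD'
  simp only [comp2_mul, comp2_pow, e4] at hD'
  simp only [comp2_lin, comp2_C, one_pow, C_1, one_mul] at hD'
  have dv := fun l h => comp2_dvd a (-q4) b p4 l (Cpoly A B) h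
  simp only [← Cpoly_pull] at dv
  have v1 := dv _ hdvd₁
  have v2 := dv _ hdvd₂
  have v3 := dv _ hdvd₃
  have v4 := dv _ hdvd₄
  rw [comp2_lin] at v1 v2 v3
  rw [e4] at v4
  have hA' := comp2_homog a (-q4) b p4 4 A hA
  have hB' := comp2_homog a (-q4) b p4 4 B hB
  have dd : ∀ p q p' q' : ℂ, p * q' - q * p' ≠ 0 →
      (p * a + q * b) * (p' * -q4 + q' * p4) - (p * -q4 + q * p4) * (p' * a + q' * b) ≠ 0 := by
    intro p q p' q' h h0
    apply h
    linear_combination h0 - (p * q' - q * p') * hdet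
  exact core _ _ ((hA'.C_mul a).add (hB'.C_mul b)) ((hA'.C_mul (-q4)).add (hB'.C_mul p4))
    (NCF_pull a (-q4) b p4 hdet A B hcop) c hc _ _ _ _ _ _
    (fun h => d14 (by linear_combination -h)) (fun h => d24 (by linear_combination -h))
    (fun h => d34 (by linear_combination -h)) (dd _ _ _ _ d12) (dd _ _ _ _ d13) (dd _ _ _ _ d23)
    v1 v2 v3 v4 hD'
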